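/- If X has finite second moment and finite Fisher information I(X), then its characteristic function f(t) = E e^{itX} satisfies |f'(t)| ≤ (1 + √(β₂ I(X)))/|t| for all t ≠ 0, where β₂ = E X². -/

import Mathlib

open MeasureTheory Real

/-!
Write `e(x) = exp(itx)`. Differentiating under the integral gives `f'(t) = i ∫ e(x) x p(x) dx`, and
integrating by parts moves a factor `it` from `e` to the derivative `p + x p'` of `x p`:
`|t| |f'(t)| = |∫ e (p + x p')| ≤ 1 + ∫ |x p'|`. Splitting `x p' = (x √p) (p' / √p)`, Cauchy–Schwarz
bounds the last integral by `√(β₂ I)`.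

Since `p` is only locally absolutely continuous, integration by parts rests on the
fundamental theorem of calculus for absolutely continuous functions. The boundary term vanishes
because an integrable function that has a limit at infinity tends to zero.
-/

open Filter Set Topology

section IndefiniteIntegral

variable {E : Type*} [NormedAddCommGroup E]

theorem eq_zero_of_integrable_of_tendsto_atTop {u : ℝ → E} {c : E} (hu : Integrable u)
    (hc : Tendsto u atTop (𝓝 c)) : c = 0 := by
  refine (hu.integrableAtFilter atTop).eq_zero_of_tendsto (fun s hs ↦ ?_) hc
  obtain ⟨b, hb⟩ := mem_atTop_sets.1 hs
  exact measure_mono_top hb volume_Ici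

theorem absolutelyContinuousOnInterval_of_dist_le {X Y : Type*} [PseudoMetricSpace X]
    [PseudoMetricSpace Y] {f : ℝ → X} {g : ℝ → Y} {a b : ℝ}
    (hg : AbsolutelyContinuousOnInterval g a b)
    (hfg : ∀ x ∈ uIcc a b, ∀ y ∈ uIcc a b, dist (f x) (f y) ≤ dist (g x) (g y)) :
    AbsolutelyContinuousOnInterval f a b := by
  refine squeeze_zero' (.of_forall fun _ ↦ Finset.sum_nonneg fun _ _ ↦ dist_nonneg) ?_ hg
  refine eventually_inf_principal.2 (.of_forall fun _ hI ↦ Finset.sum_le_sum fun i hi ↦ ?_)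
  exact hfg _ (hI.1 i hi).1 _ (hI.1 i hi).2

variable [NormedSpace ℝ E]

theorem absolutelyContinuousOnInterval_intervalIntegral {u' : ℝ → E} {a b : ℝ}
    (hu' : IntervalIntegrable u' volume a b) :
    AbsolutelyContinuousOnInterval (fun x ↦ ∫ y in a..x, u' y) a b := by
  refine absolutelyContinuousOnInterval_of_dist_le
    (hu'.norm.absolutelyContinuousOnInterval_intervalIntegral left_mem_uIcc) fun x hx y hy ↦ ?_
  have hax : IntervalIntegrable u' volume a x := hu'.mono_set (uIcc_subset_uIcc_left hx)
  have hay : IntervalIntegrable u' volume a y := hu'.mono_set (uIcc_subset_uIcc_left hy)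
  rw [dist_eq_norm, Real.dist_eq, intervalIntegral.integral_interval_sub_left hax hay,
    intervalIntegral.integral_interval_sub_left hax.norm hay.norm]
  exact intervalIntegral.norm_integral_le_abs_integral_norm

theorem intervalIntegral_eq_sub_of_ae_hasDerivAt [CompleteSpace E] {u u' : ℝ → E} {a b : ℝ}
    (hu : AbsolutelyContinuousOnInterval u a b) (hu' : IntervalIntegrable u' volume a b)
    (hderiv : ∀ᵐ x, x ∈ uIcc a b → HasDerivAt u (u' x) x) :
    ∫ x in a..b, u' x = u b - u a := by
  have hzero : ∀ᵐ x, x ∈ uIcc a b → HasDerivAt (u - fun x ↦ ∫ y in a..x, u' y) 0 x := by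
    filter_upwards [hderiv, hu'.ae_hasDerivAt_integral] with x hx hx' hmem
    simpa only [sub_self] using (hx hmem).sub (hx' hmem a left_mem_uIcc)
  obtain ⟨c, hc⟩ := (hu.sub
    (absolutelyContinuousOnInterval_intervalIntegral hu')).const_of_ae_hasDerivAt_zero hzero
  have hab := (hc a left_mem_uIcc).trans (hc b right_mem_uIcc).symm
  simp only [Pi.sub_apply, intervalIntegral.integral_same, sub_zero] at hab
  rw [hab, sub_sub_cancel]

/-- `u` is an indefinite integral of `u'`: it is locally absolutely continuous with almost
everywhere derivative `u'`. Local integrability of `u'` is required explicitly because the Bochner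
integral of a non-integrable function is `0`. -/
structure IsIndefiniteIntegral (u u' : ℝ → E) : Prop where
  locallyIntegrable : LocallyIntegrable u'
  sub_eq_integral (a b : ℝ) : u b - u a = ∫ x in a..b, u' x

namespace IsIndefiniteIntegral

variable {u u' : ℝ → E}

theorem of_hasDerivAt [CompleteSpace E] (hderiv : ∀ x, HasDerivAt u (u' x) x)
    (hcont : Continuous u') : IsIndefiniteIntegral u u' where
  locallyIntegrable := hcont.locallyIntegrable
  sub_eq_integral a b := (intervalIntegral.integral_eq_sub_of_hasDerivAt (fun x _ ↦ hderiv x)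
    (hcont.intervalIntegrable a b)).symm

theorem intervalIntegrable (h : IsIndefiniteIntegral u u') (a b : ℝ) :
    IntervalIntegrable u' volume a b :=
  (h.locallyIntegrable.integrableOn_isCompact isCompact_uIcc).intervalIntegrable

theorem eq_add_integral (h : IsIndefiniteIntegral u u') (a : ℝ) :
    u = fun x ↦ u a + ∫ y in a..x, u' y := by
  funext x
  rw [← h.sub_eq_integral, add_sub_cancel]

theorem absolutelyContinuousOnInterval (h : IsIndefiniteIntegral u u') (a b : ℝ) :
    AbsolutelyContinuousOnInterval u a b := by
  refine absolutelyContinuousOnInterval_of_dist_le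
    (absolutelyContinuousOnInterval_intervalIntegral (h.intervalIntegrable a b)) fun x _ y _ ↦ ?_
  rw [← h.sub_eq_integral, ← h.sub_eq_integral, dist_sub_right]

theorem continuous (h : IsIndefiniteIntegral u u') : Continuous u := by
  rw [h.eq_add_integral 0]
  exact continuous_const.add (intervalIntegral.continuous_primitive h.intervalIntegrable 0)

theorem ae_hasDerivAt [CompleteSpace E] (h : IsIndefiniteIntegral u u') :
    ∀ᵐ x, HasDerivAt u (u' x) x := by
  filter_upwards [LocallyIntegrable.ae_hasDerivAt_integral h.locallyIntegrable] with x hx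
  rw [h.eq_add_integral 0]
  exact (hx 0).const_add (u 0)

theorem smul {𝕜 : Type*} [RCLike 𝕜] [NormedSpace 𝕜 E] [IsScalarTower ℝ 𝕜 E] [CompleteSpace E]
    {c c' : ℝ → 𝕜} (hc : IsIndefiniteIntegral c c') (hu : IsIndefiniteIntegral u u') :
    IsIndefiniteIntegral (fun x ↦ c x • u x) (fun x ↦ c x • u' x + c' x • u x) where
  locallyIntegrable :=
    (hu.locallyIntegrable.continuous_smul hc.continuous).add
      (hc.locallyIntegrable.smul_continuous hu.continuous)
  sub_eq_integral a b := by
    refine (intervalIntegral_eq_sub_of_ae_hasDerivAt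
      ((hc.absolutelyContinuousOnInterval a b).smul (hu.absolutelyContinuousOnInterval a b))
      (((hu.intervalIntegrable a b).continuousOn_smul hc.continuous.continuousOn).add
        ((hc.intervalIntegrable a b).smul_continuousOn hu.continuous.continuousOn)) ?_).symm
    filter_upwards [hc.ae_hasDerivAt, hu.ae_hasDerivAt] with x hcx hux _
    exact hcx.smul hux

theorem integral_eq_zero (h : IsIndefiniteIntegral u u') (hu : Integrable u)
    (hu' : Integrable u') : ∫ x, u' x = 0 := by
  have hlim : Tendsto (fun R ↦ u R - u (-R)) atTop (𝓝 (∫ x, u' x)) := by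
    simpa only [h.sub_eq_integral, id] using
      intervalIntegral_tendsto_integral hu' tendsto_neg_atTop_atBot tendsto_id
  exact eq_zero_of_integrable_of_tendsto_atTop (hu.sub hu.comp_neg) hlim

-- Where `u'` fails to be integrable on `[v, w]`, the junk value `0` of its integral makes `u`
-- constant outside `(v, w)`, so that the integrability of `u` forces `u = 0` there.
theorem of_integrable (hu : Integrable u) (hne : u ≠ 0)
    (hsub : ∀ a b : ℝ, u b - u a = ∫ x in a..b, u' x) : IsIndefiniteIntegral u u' := by
  have hzero {v w : ℝ} (hvw : ¬ IntervalIntegrable u' volume v w) : u v = 0 := by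
    have hconst : ∀ x ≤ min v w, ∀ y ≥ max v w, u y = u x := fun x hx y hy ↦ by
      have hxy : ¬ IntervalIntegrable u' volume x y := fun hxy ↦
        hvw (hxy.mono_set ((Icc_subset_Icc hx hy).trans Icc_subset_uIcc))
      rw [← sub_eq_zero, hsub, intervalIntegral.integral_undef hxy]
    have hmin : u (min v w) = 0 := eq_zero_of_integrable_of_tendsto_atTop hu <|
      tendsto_const_nhds.congr' <| (eventually_ge_atTop (max v w)).mono
        fun y hy ↦ (hconst _ le_rfl y hy).symm
    have hmax : u (max v w) = 0 := (hconst _ le_rfl _ le_rfl).trans hmin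
    rcases le_total v w with h | h
    · rwa [min_eq_left h] at hmin
    · rwa [max_eq_left h] at hmax
  have hint (a b : ℝ) : IntervalIntegrable u' volume a b := by
    by_contra hab
    refine hne (funext fun x ↦ ?_)
    by_cases hax : IntervalIntegrable u' volume a x
    · exact hzero fun hxb ↦ hab (hax.trans hxb)
    · exact hzero fun hxa ↦ hax hxa.symm
  refine ⟨fun x ↦ ⟨Icc (x - 1) (x + 1), Icc_mem_nhds (by linarith) (by linarith), ?_⟩, hsub⟩
  exact (intervalIntegrable_iff_integrableOn_Icc_of_le (by linarith)).1 (hint _ _)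

end IsIndefiniteIntegral

end IndefiniteIntegral

section Fourier

theorem norm_cexp_I_mul_ofReal_mul_ofReal (t x : ℝ) :
    ‖Complex.exp (Complex.I * t * x)‖ = 1 := by
  rw [mul_assoc, ← Complex.ofReal_mul, Complex.norm_exp_I_mul_ofReal]

theorem IsIndefiniteIntegral.abs_mul_norm_integral_cexp_smul_le {E : Type*} [NormedAddCommGroup E]
    [NormedSpace ℂ E] [CompleteSpace E] {u u' : ℝ → E}
    (h : IsIndefiniteIntegral u u') (hu : Integrable u) (hu' : Integrable u') (t : ℝ) :
    |t| * ‖∫ x : ℝ, Complex.exp (Complex.I * t * x) • u x‖ ≤ ∫ x, ‖u' x‖ := by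
  let e : ℝ → ℂ := fun x ↦ Complex.exp (Complex.I * t * x)
  have he : Continuous e := by fun_prop
  have he_norm : ∀ x, ‖e x‖ = 1 := norm_cexp_I_mul_ofReal_mul_ofReal t
  have hderiv (x : ℝ) : HasDerivAt e (Complex.I * t * e x) x := by
    simpa only [mul_one, mul_comm (Complex.exp _), id] using
      ((hasDerivAt_id (x : ℂ)).const_mul (Complex.I * t)).cexp.comp_ofReal
  have hint {v : ℝ → E} (hv : Integrable v) : Integrable fun x ↦ e x • v x :=
    hv.bdd_smul 1 he.aestronglyMeasurable (.of_forall fun x ↦ (he_norm x).le)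
  have hparts : (∫ x, e x • u' x) + (Complex.I * t) • ∫ x, e x • u x = 0 := by
    have hprod := (IsIndefiniteIntegral.of_hasDerivAt hderiv (by fun_prop)).smul h
    simp only [mul_smul _ (e _)] at hprod
    rw [← integral_smul, ← integral_add (hint hu') ((hint hu).fun_smul _)]
    exact hprod.integral_eq_zero (hint hu) ((hint hu').add ((hint hu).fun_smul _))
  calc |t| * ‖∫ x, e x • u x‖ = ‖(Complex.I * t) • ∫ x, e x • u x‖ := by
        rw [norm_smul, norm_mul, Complex.norm_I, one_mul, Complex.norm_real, Real.norm_eq_abs]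
    _ = ‖∫ x, e x • u' x‖ := by rw [eq_neg_of_add_eq_zero_left hparts, norm_neg]
    _ ≤ ∫ x, ‖e x • u' x‖ := norm_integral_le_integral_norm _
    _ = ∫ x, ‖u' x‖ := by simp only [norm_smul, he_norm, one_mul]

theorem hasDerivAt_integral_cexp_mul {μ : Measure ℝ} {g : ℝ → ℂ} (hg : Integrable g μ)
    (hxg : Integrable (fun x : ℝ ↦ x * g x) μ) (t : ℝ) :
    HasDerivAt (fun s : ℝ ↦ ∫ x : ℝ, Complex.exp (Complex.I * s * x) * g x ∂μ)
      (Complex.I * ∫ x : ℝ, Complex.exp (Complex.I * t * x) * (x * g x) ∂μ) t := by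
  have hmeas (s : ℝ) :
      AEStronglyMeasurable (fun x : ℝ ↦ Complex.exp (Complex.I * s * x)) μ :=
    Continuous.aestronglyMeasurable (by fun_prop)
  have hderiv (s x : ℝ) : HasDerivAt (fun s : ℝ ↦ Complex.exp (Complex.I * s * x) * g x)
      (Complex.I * (Complex.exp (Complex.I * s * x) * (x * g x))) s := by
    convert! ((((hasDerivAt_id (s : ℂ)).const_mul Complex.I).mul_const
      (x : ℂ)).cexp.mul_const (g x)).comp_ofReal using 1
    simp only [id]
    ring
  rw [← integral_const_mul]
  refine (hasDerivAt_integral_of_dominated_loc_of_deriv_le univ_mem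
    (.of_forall fun s ↦ (hmeas s).mul hg.aestronglyMeasurable)
    (hg.bdd_mul (c := 1) (hmeas t)
      (.of_forall fun x ↦ (norm_cexp_I_mul_ofReal_mul_ofReal t x).le))
    (((hmeas t).mul hxg.aestronglyMeasurable).const_mul Complex.I)
    (.of_forall fun x s _ ↦ ?_) hxg.norm (.of_forall fun x s _ ↦ hderiv s x)).2
  rw [norm_mul, norm_mul, Complex.norm_I, norm_cexp_I_mul_ofReal_mul_ofReal, one_mul, one_mul]

end Fourier

section CauchySchwarz

variable {α : Type*} [MeasurableSpace α] {μ : Measure α} {f g w : α → ℝ}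

theorem integral_abs_mul_le_sqrt_integral_sq_mul (hf : MemLp f 2 μ) (hg : MemLp g 2 μ) :
    ∫ x, |f x * g x| ∂μ ≤ √((∫ x, f x ^ 2 ∂μ) * ∫ x, g x ^ 2 ∂μ) := by
  have h := integral_mul_norm_le_Lp_mul_Lq (μ := μ) (f := f) (g := g)
    Real.HolderConjugate.two_two (by simpa using hf) (by simpa using hg)
  simpa only [Real.rpow_two, ← Real.sqrt_eq_rpow, Real.norm_eq_abs, sq_abs, ← abs_mul,
    ← Real.sqrt_mul (integral_nonneg fun x ↦ sq_nonneg (f x))] using h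

theorem integrable_mul_and_integral_abs_mul_le_sqrt_weighted (hf : AEStronglyMeasurable f μ)
    (hg : AEStronglyMeasurable g μ) (hw : AEStronglyMeasurable w μ) (hw_nonneg : ∀ x, 0 ≤ w x)
    (hg_zero : ∀ x, w x = 0 → g x = 0) (hfw : Integrable (fun x ↦ f x ^ 2 * w x) μ)
    (hgw : IntegrableOn (fun x ↦ g x ^ 2 / w x) {x | 0 < w x} μ) :
    Integrable (fun x ↦ f x * g x) μ ∧
      ∫ x, |f x * g x| ∂μ ≤
        √((∫ x, f x ^ 2 * w x ∂μ) * ∫ x in {x | 0 < w x}, g x ^ 2 / w x ∂μ) := by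
  have hzero : ∀ x ∉ {x | 0 < w x}, g x ^ 2 / w x = 0 := fun x hx ↦ by
    rw [(hw_nonneg x).antisymm' (not_lt.1 hx), div_zero]
  have hsq_mul (x : α) : (f x * √(w x)) ^ 2 = f x ^ 2 * w x := by
    rw [mul_pow, Real.sq_sqrt (hw_nonneg x)]
  have hsq_div (x : α) : (g x / √(w x)) ^ 2 = g x ^ 2 / w x := by
    rw [div_pow, Real.sq_sqrt (hw_nonneg x)]
  have hsplit (x : α) : f x * √(w x) * (g x / √(w x)) = f x * g x := by
    rcases (hw_nonneg x).eq_or_lt with hx | hx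
    · rw [hg_zero x hx.symm, zero_div, mul_zero, mul_zero]
    · have := Real.sqrt_pos.2 hx
      field_simp
  have hsqrt : AEStronglyMeasurable (fun x ↦ √(w x)) μ :=
    Real.continuous_sqrt.comp_aestronglyMeasurable hw
  have hF : MemLp (fun x ↦ f x * √(w x)) 2 μ :=
    (memLp_two_iff_integrable_sq (hf.mul hsqrt)).2 (by simpa only [Pi.mul_apply, hsq_mul] using hfw)
  have hG : MemLp (fun x ↦ g x / √(w x)) 2 μ :=
    (memLp_two_iff_integrable_sq (hg.div₀ hsqrt)).2 <| by
      simpa only [Pi.div_apply, hsq_div] using hgw.integrable_of_forall_notMem_eq_zero hzero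
  rw [setIntegral_eq_integral_of_forall_compl_eq_zero hzero]
  simpa only [Pi.mul_def, hsplit, hsq_mul, hsq_div] using
    And.intro (hF.integrable_mul hG) (integral_abs_mul_le_sqrt_integral_sq_mul hF hG)

end CauchySchwarz

section Density

variable {p p' : ℝ → ℝ}

theorem integrable_id_mul_of_integrable_sq_mul (hp : Integrable p)
    (hp₂ : Integrable fun x ↦ x ^ 2 * p x) : Integrable fun x ↦ x * p x := by
  refine (hp.norm.add hp₂.norm).mono' (continuous_id.aestronglyMeasurable.mul
    hp.aestronglyMeasurable) (.of_forall fun x ↦ ?_)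
  have hx : |x| ≤ 1 + x ^ 2 := by nlinarith [sq_abs x, sq_nonneg (|x| - 1)]
  simpa [abs_mul, add_mul] using mul_le_mul_of_nonneg_right hx (abs_nonneg (p x))

theorem IsIndefiniteIntegral.abs_mul_norm_integral_cexp_mul_id_mul_le
    (h : IsIndefiniteIntegral p p') (hp : Integrable p) (hxp : Integrable fun x ↦ x * p x)
    (hxp' : Integrable fun x ↦ x * p' x) (t : ℝ) :
    |t| * ‖∫ x : ℝ, Complex.exp (Complex.I * t * x) * (x * p x)‖ ≤
      (∫ x, |p x|) + ∫ x, |x * p' x| := by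
  have hprod : IsIndefiniteIntegral (fun x : ℝ ↦ (x * p x : ℂ))
      (fun x ↦ ((p x + x * p' x : ℝ) : ℂ)) := by
    convert! h.smul (.of_hasDerivAt (fun _ ↦ Complex.ofRealCLM.hasDerivAt) continuous_const)
      using 2 <;> simp [mul_comm]
  calc _ ≤ ∫ x, ‖((p x + x * p' x : ℝ) : ℂ)‖ :=
        hprod.abs_mul_norm_integral_cexp_smul_le (by simpa using hxp.ofReal (𝕜 := ℂ))
          (hp.add hxp').ofReal t
    _ ≤ ∫ x, (|p x| + |x * p' x|) := by
        simp only [Complex.norm_real]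
        exact integral_mono (hp.add hxp').norm (hp.abs.add hxp'.abs) fun x ↦ norm_add_le _ _
    _ = (∫ x, |p x|) + ∫ x, |x * p' x| := integral_add hp.abs hxp'.abs

end Density

/-- If `X` has density `p` with finite second moment `β₂` and finite Fisher information
`I`, then the derivative of its characteristic function `f(t) = ∫ e^{itx} p(x) dx`
satisfies `|f'(t)| ≤ (1 + √(β₂ I)) / |t|` for all `t ≠ 0`. -/
theorem charFun_deriv_bound
    (p p' : ℝ → ℝ) (I β₂ : ℝ)
    (hnn : ∀ x, 0 ≤ p x) (hint : Integrable p) (h1 : ∫ x, p x = 1)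
    (hFTC : ∀ a b : ℝ, p b - p a = ∫ x in a..b, p' x)
    (hconv : ∀ x, p x = 0 → p' x = 0)
    (hIfin : IntegrableOn (fun x => (p' x) ^ 2 / p x) {x | 0 < p x})
    (hI : I = ∫ x in {x | 0 < p x}, (p' x) ^ 2 / p x)
    (hβint : Integrable (fun x => x ^ 2 * p x))
    (hβ : β₂ = ∫ x, x ^ 2 * p x)
    (f : ℝ → ℂ)
    (hf : ∀ t : ℝ, f t = ∫ x : ℝ, Complex.exp (Complex.I * t * x) * (p x : ℂ)) :
    ∀ t : ℝ, t ≠ 0 → ∀ d : ℂ, HasDerivAt f d t →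
      ‖d‖ ≤ (1 + Real.sqrt (β₂ * I)) / |t| := by
  intro t ht d hd
  have hp_ne : p ≠ 0 := fun hp ↦ by simp [hp] at h1
  have hp' : IsIndefiniteIntegral p p' := .of_integrable hint hp_ne hFTC
  have hxp := integrable_id_mul_of_integrable_sq_mul hint hβint
  obtain ⟨hxp', hxp'_le⟩ := integrable_mul_and_integral_abs_mul_le_sqrt_weighted
    aestronglyMeasurable_id hp'.locallyIntegrable.aestronglyMeasurable hint.aestronglyMeasurable
    hnn hconv hβint hIfin
  have hd_eq : d = Complex.I * ∫ x : ℝ, Complex.exp (Complex.I * t * x) * (x * p x) :=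
    hd.unique <| funext hf ▸ hasDerivAt_integral_cexp_mul hint.ofReal
      (by simpa using hxp.ofReal (𝕜 := ℂ)) t
  rw [le_div_iff₀' (abs_pos.2 ht), hd_eq, norm_mul, Complex.norm_I, one_mul]
  calc _ ≤ (∫ x, |p x|) + ∫ x, |x * p' x| :=
        hp'.abs_mul_norm_integral_cexp_mul_id_mul_le hint hxp hxp' t
    _ = 1 + ∫ x, |x * p' x| := by simp only [abs_of_nonneg (hnn _), h1]
    _ ≤ 1 + √(β₂ * I) := by rw [hβ, hI]; gcongr; exact hxp'_le
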